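/- (Regret-to-suboptimality conversion with exact maximizers; core of the proof of Theorem 2.) Let K ≥ 1, let μ_1, …, μ_K ∈ P and λ_1, …, λ_K ∈ Λ_B satisfy L(μ, λ_k) ≤ L(μ_k, λ_k) for all μ ∈ P and all k (each μ_k exactly maximizes L(·, λ_k)), and suppose the average-regret bound (1/K)·Σ_{k=1}^K L(μ_k, λ_k) ≤ inf_{λ ∈ Λ_B} (1/K)·Σ_{k=1}^K L(μ_k, λ) + ε holds for some ε ≥ 0. Then the averaged policy μ̄ = (1/K)·Σ_{k=1}^K μ_k lies in P and, for every μ ∈ P, inf_{λ ∈ Λ_B} L(μ, λ) ≤ inf_{λ ∈ Λ_B} L(μ̄, λ) + ε (i.e., μ̄ is ε-optimal for the bounded sup-inf problem). -/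

import Mathlib

/-!
Since `L(·, λ)` is affine, `L(μ̄, λ)` is the average of the `L(μ_k, λ)`, so the infimum in the
regret bound is exactly `inf_λ L(μ̄, λ)`. For `ν ∈ P` and each `k`,
`inf_λ L(ν, λ) ≤ L(ν, λ_k) ≤ L(μ_k, λ_k)`; averaging over `k` and applying the regret bound gives
the claim. The first inequality needs `L(ν, ·)` to be bounded below on `Λ_B`, as real infima of
unbounded families are junk.
-/

theorem affineMap_average {V : Type*} [AddCommGroup V] [Module ℝ V] (f : V →ᵃ[ℝ] ℝ)
    (s : Finset ℕ) (c : ℝ) (hc : c * (s.card : ℝ) = 1) (x : ℕ → V) :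
    f (c • ∑ k ∈ s, x k) = c * ∑ k ∈ s, f (x k) := by
  have h : ∀ v, f v = f.linear v + f 0 := fun v => congrFun f.decomp v
  rw [h, Finset.sum_congr rfl fun k _ => h (x k)]
  simp only [map_smul, map_sum, smul_eq_mul, Finset.sum_add_distrib, Finset.sum_const,
    nsmul_eq_mul]
  linear_combination (-f 0) * hc

/-- **Regret-to-suboptimality conversion with exact maximizers**
(core of the proof of Theorem 2).  If each `μ_k` exactly maximizes `L(·, λ_k)` over `P`
and the iterates satisfy the average-regret bound `ε` over `Λ_B`, then the averaged
policy `μ̄ = (1/K) ∑ μ_k` lies in `P` and is `ε`-optimal for the bounded sup-inf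
problem. -/
theorem regret_to_subopt_exact
    {V : Type*} [AddCommGroup V] [Module ℝ V]
    (P : Set V) (hPne : P.Nonempty) (hPconv : Convex ℝ P)
    (Ro Rc Rf : V →ᵃ[ℝ] ℝ)
    (ρ δ B : ℝ) (hB : 0 < B)
    (L : V → ℝ × ℝ → ℝ)
    (hL : ∀ μ lam, L μ lam = Ro μ + lam.1 * (Rc μ - ρ) + lam.2 * (Rf μ - (1 - δ)))
    (ΛB : Set (ℝ × ℝ))
    (hΛB : ΛB = {lam : ℝ × ℝ | 0 ≤ lam.1 ∧ 0 ≤ lam.2 ∧ lam.1 + lam.2 ≤ B})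
    (K : ℕ) (hK : 1 ≤ K) (ε : ℝ) (hε : 0 ≤ ε)
    (μ : ℕ → V) (lam : ℕ → ℝ × ℝ)
    (hμP : ∀ k ∈ Finset.Icc 1 K, μ k ∈ P)
    (hlamB : ∀ k ∈ Finset.Icc 1 K, lam k ∈ ΛB)
    (hμopt : ∀ k ∈ Finset.Icc 1 K, ∀ ν ∈ P, L ν (lam k) ≤ L (μ k) (lam k))
    (hregret : (K : ℝ)⁻¹ * ∑ k ∈ Finset.Icc 1 K, L (μ k) (lam k) ≤
        (⨅ l : ΛB, (K : ℝ)⁻¹ * ∑ k ∈ Finset.Icc 1 K, L (μ k) (l : ℝ × ℝ)) + ε)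
    (μbar : V) (hμbar : μbar = (K : ℝ)⁻¹ • ∑ k ∈ Finset.Icc 1 K, μ k) :
    μbar ∈ P ∧
    ∀ ν ∈ P, (⨅ l : ΛB, L ν (l : ℝ × ℝ)) ≤ (⨅ l : ΛB, L μbar (l : ℝ × ℝ)) + ε := by
  have hKpos : (0 : ℝ) < K := by exact_mod_cast hK
  have hc : (K : ℝ)⁻¹ * ((Finset.Icc 1 K).card : ℝ) = 1 := by
    simp [hKpos.ne']
  have havg : ∀ l, L μbar l = (K : ℝ)⁻¹ * ∑ k ∈ Finset.Icc 1 K, L (μ k) l := by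
    intro l
    simp only [hL, hμbar, affineMap_average _ _ _ hc, Finset.sum_add_distrib, ← Finset.mul_sum,
      Finset.sum_sub_distrib, Finset.sum_const, nsmul_eq_mul]
    linear_combination (l.1 * ρ + l.2 * (1 - δ)) * hc
  refine ⟨?_, fun ν hν => ?_⟩
  · rw [hμbar, Finset.smul_sum]
    refine hPconv.sum_mem (fun _ _ => by positivity) ?_ hμP
    rw [Finset.sum_const, nsmul_eq_mul, mul_comm, hc]
  · have hbdd : BddBelow (Set.range fun l : ΛB => L ν (l : ℝ × ℝ)) := by
      refine ⟨Ro ν - B * |Rc ν - ρ| - B * |Rf ν - (1 - δ)|, ?_⟩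
      rintro _ ⟨⟨l, hl⟩, rfl⟩
      rw [hΛB] at hl
      obtain ⟨h1, h2, h3⟩ := hl
      have key : ∀ t a : ℝ, 0 ≤ t → t ≤ B → -(B * |a|) ≤ t * a := fun t a ht htB => by
        nlinarith [neg_abs_le a, abs_nonneg a]
      have := key l.1 (Rc ν - ρ) h1 (by linarith)
      have := key l.2 (Rf ν - (1 - δ)) h2 (by linarith)
      simp only [hL]
      linarith
    simp only [havg]
    refine le_trans ?_ hregret
    have hsum := Finset.card_nsmul_le_sum (Finset.Icc 1 K) (fun k => L (μ k) (lam k))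
      (⨅ l : ΛB, L ν (l : ℝ × ℝ)) fun k hk =>
        (ciInf_le hbdd ⟨lam k, hlamB k hk⟩).trans (hμopt k hk ν hν)
    rw [nsmul_eq_mul] at hsum
    calc (⨅ l : ΛB, L ν (l : ℝ × ℝ))
        = (K : ℝ)⁻¹ * (((Finset.Icc 1 K).card : ℝ) * ⨅ l : ΛB, L ν (l : ℝ × ℝ)) := by
          rw [← mul_assoc, hc, one_mul]
      _ ≤ _ := mul_le_mul_of_nonneg_left hsum (by positivity)
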